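/- arXiv:1007.2669 — 3 statements merged into one kernel-verified Lean document; each statement's English description precedes it below -/
import Mathlib

section
/- For every integer N ≥ 1, the limit as j → ∞ of the matrix-power entry (P^j)(1, N) exists and equals 1/N. -/
/-!
The identity function is harmonic for `P`, and `g(a) = a (N - a)` satisfies `P g = g - Δ²` in the
interior, where `Δ ≥ 1`.  Since `0 ≤ g ≤ N²`, this gives `P g ≤ (1 - 1/N²) g`.  As
`|a/N - 1_{a = N}| ≤ g(a)`, applying `P` repeatedly yields
`|a/N - P^j(a, N)| ≤ (1 - 1/N²)^j g(a)` (`abs_sub_pow_le`), so `P^j(a, N) → a/N` for every `a`.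
-/

open Matrix Finset

/-- `Δ(r) = ⌈min(r, N−r)/3⌉`. -/
def Delta (N r : ℕ) : ℕ := (min r (N - r) + 2) / 3

/-- The stochastic matrix `P` on `{0,1,…,N}` with `P(a, a−Δ(a)) = P(a, a+Δ(a)) = 1/2`
for `0 < a < N`, `P(0,0) = P(N,N) = 1`. -/
noncomputable def Pmat (N : ℕ) : Matrix (Fin (N+1)) (Fin (N+1)) ℝ :=
  fun a b =>
    if (a : ℕ) = 0 ∨ (a : ℕ) = N then (if b = a then 1 else 0)
    else (if (b : ℕ) = (a : ℕ) - Delta N a then 1/2 else 0) +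
         (if (b : ℕ) = (a : ℕ) + Delta N a then 1/2 else 0)

lemma Pmat_sum_boundary (N : ℕ) (a : Fin (N+1)) (ha : (a : ℕ) = 0 ∨ (a : ℕ) = N)
    (h : Fin (N+1) → ℝ) : ∑ b, Pmat N a b * h b = h a := by
  simp only [Pmat, if_pos ha]
  simp

lemma Pmat_sum_interior (N : ℕ) (a x y : Fin (N+1)) (ha : ¬((a : ℕ) = 0 ∨ (a : ℕ) = N))
    (hx : (x : ℕ) = a - Delta N a) (hy : (y : ℕ) = a + Delta N a)
    (h : Fin (N+1) → ℝ) : ∑ b, Pmat N a b * h b = (h x + h y) / 2 := by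
  simp only [Pmat, if_neg ha, ← hx, ← hy, ← Fin.ext_iff, add_mul, Finset.sum_add_distrib,
    ite_mul, zero_mul, Finset.sum_ite_eq', Finset.mem_univ, if_true]
  ring

/-- The distance from the `j`-step hitting probability of `N` to its limit `a/N` decays
geometrically, with `a (N - a)` as Lyapunov function. -/
lemma abs_sub_pow_le (N : ℕ) (hN : 1 ≤ N) (j : ℕ) (a : Fin (N+1)) :
    |(a : ℝ) / N - (Pmat N ^ j) a (Fin.last N)| ≤
      (1 - 1 / (N : ℝ)^2)^j * ((a : ℝ) * (N - a)) := by
  have hN' : (1 : ℝ) ≤ N := by exact_mod_cast hN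
  have hN0 : (0 : ℝ) < N := by linarith
  have hc : 0 ≤ 1 - 1 / (N : ℝ)^2 := by
    rw [sub_nonneg, div_le_one (by positivity)]
    nlinarith
  induction j generalizing a with
  | zero =>
    rw [pow_zero, pow_zero, one_mul, Matrix.one_apply]
    rcases eq_or_ne a (Fin.last N) with rfl | hne
    · simp [hN0.ne']
    · have hlt : (a : ℕ) + 1 ≤ N := by
        have := a.2
        have : (a : ℕ) ≠ N := fun h => hne (Fin.ext h)
        omega
      have hlt' : (a : ℝ) + 1 ≤ N := by exact_mod_cast hlt
      have ha : (0 : ℝ) ≤ (a : ℝ) := by positivity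
      rw [if_neg hne, sub_zero, abs_of_nonneg (by positivity)]
      calc (a : ℝ) / N ≤ a := div_le_self ha hN'
        _ ≤ a * (N - a) := le_mul_of_one_le_right ha (by linarith)
  | succ j ih =>
    rw [pow_succ', Matrix.mul_apply]
    by_cases hb : (a : ℕ) = 0 ∨ (a : ℕ) = N
    · rw [Pmat_sum_boundary N a hb]
      have hg : (a : ℝ) * (N - a) = 0 := by
        rcases hb with h | h <;> simp [h]
      have := ih a
      rw [hg, mul_zero] at this ⊢
      exact this
    · have ha := a.2
      have h1 : 1 ≤ Delta N a := by unfold Delta; omega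
      have h2 : Delta N a ≤ a := by unfold Delta; omega
      have h3 : a + Delta N a ≤ N := by unfold Delta; omega
      rw [Pmat_sum_interior N a ⟨a - Delta N a, by omega⟩ ⟨a + Delta N a, by omega⟩ hb rfl rfl]
      have ihx := ih ⟨a - Delta N a, by omega⟩
      have ihy := ih ⟨a + Delta N a, by omega⟩
      simp only [Nat.cast_sub h2, Nat.cast_add] at ihx ihy
      have h1' : (1 : ℝ) ≤ Delta N a := by exact_mod_cast h1
      have haN : (a : ℝ) ≤ N := by exact_mod_cast Nat.lt_succ_iff.mp ha
      have ha0 : (0 : ℝ) ≤ (a : ℝ) := by positivity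
      generalize (Delta N a : ℝ) = d at *
      generalize (a : ℝ) = r at *
      generalize (Pmat N ^ j) _ (Fin.last N) = p at *
      generalize (Pmat N ^ j) _ (Fin.last N) = q at *
      -- The average of `g` over the two neighbours is `g(r) - d²`.
      have hg : r * (N - r) - d ^ 2 ≤ (1 - 1 / (N : ℝ)^2) * (r * (N - r)) := by
        have : 1 / (N : ℝ)^2 * (r * (N - r)) ≤ 1 := by
          rw [one_div_mul_eq_div, div_le_one (by positivity)]
          nlinarith
        nlinarith
      have hm := mul_le_mul_of_nonneg_left hg (pow_nonneg hc j)
      have e : r / N - (p + q) / 2 = ((r - d) / N - p) / 2 + ((r + d) / N - q) / 2 := by ring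
      rw [e, pow_succ, mul_assoc]
      generalize (1 - 1 / (N : ℝ)^2)^j = C at *
      rw [abs_le] at *
      constructor <;> nlinarith

/-- For every `N ≥ 1`, `lim_{j→∞} (P^j)(1, N) = 1/N`. -/
theorem stmt12 (N : ℕ) (hN : 1 ≤ N) :
    Filter.Tendsto (fun j : ℕ => (Pmat N ^ j) ⟨1, by omega⟩ ⟨N, by omega⟩)
      Filter.atTop (nhds (1 / (N : ℝ))) := by
  have hN' : (1 : ℝ) ≤ N := by exact_mod_cast hN
  have hc0 : 0 ≤ 1 - 1 / (N : ℝ)^2 := by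
    rw [sub_nonneg, div_le_one (by positivity)]
    nlinarith
  have hc1 : 1 - 1 / (N : ℝ)^2 < 1 := by
    have : 0 < 1 / (N : ℝ)^2 := by positivity
    linarith
  rw [tendsto_iff_dist_tendsto_zero]
  refine squeeze_zero (fun _ => dist_nonneg) (fun j => ?_)
    (by simpa using (tendsto_pow_atTop_nhds_zero_of_lt_one hc0 hc1).mul_const ((N : ℝ) - 1))
  have h := abs_sub_pow_le N hN j ⟨1, by omega⟩
  rw [dist_comm, Real.dist_eq]
  simpa [Fin.last] using h
end

section
/- For every integer N ≥ 1 and every integer ℓ ≥ 1: Σ_{b=1}^{N} (Q^ℓ)(1,b)·(1 − b/N) ≤ √N · (71/72)^ℓ. -/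
/-!
The function `φ(x) = √(x (N - x))` satisfies `P φ ≤ (71/72) φ`. Indeed, with `s = a (N - a)`,
`d = Δ(a)` and `e = d (N - 2a)`, one has `φ(a ± d)² = s - d² ± e`, and the estimate
`√((s - d²)² - e²) ≤ s - d² - e²/(2s)` gives
`(φ(a + d) + φ(a - d))² ≤ 4s - 4d² - e²/s = 4s - d² N² / s`.
Since `d ≥ min(a, N - a)/3`, we have `9 d² N² ≥ s²`, so the right-hand side is at most
`4s (1 - 1/36) ≤ 4s (71/72)²` (`phi_avg_le`).

In terms of `Q` this reads `Q g ≤ (71/72) g` for `g(b) = φ(b)/b` (`Qmat_mulVec_le`). As `Q` has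
nonnegative entries, `Q^ℓ g ≤ (71/72)^ℓ g`, and the theorem follows from `1 - b/N ≤ g(b)` and
`g(1) = √(N - 1) ≤ √N`.
-/

open Matrix Finset

/-- The Doob-transformed matrix `Q(a,b) = (b/a)·P(a,b)` on `{1,…,N}`, indexed by
`Fin N` where the index `i` stands for the state `i+1`. -/
noncomputable def Qmat (N : ℕ) : Matrix (Fin N) (Fin N) ℝ :=
  fun a b => (((b : ℕ) + 1 : ℝ) / ((a : ℕ) + 1)) *
    Pmat N ⟨(a : ℕ) + 1, Nat.succ_lt_succ a.isLt⟩ ⟨(b : ℕ) + 1, Nat.succ_lt_succ b.isLt⟩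

/-- The function `φ(x) = √(x (N - x))`, contracted by `P`. -/
noncomputable def phi (N x : ℝ) : ℝ := Real.sqrt (x * (N - x))

lemma phi_avg_le (N a d : ℝ) (ha : 0 < a) (haN : a < N) (hd : 0 ≤ d) (h1 : d ≤ a)
    (h2 : d ≤ N - a) (h3 : a ≤ 3 * d ∨ N - a ≤ 3 * d) :
    phi N (a - d) + phi N (a + d) ≤ 2 * (71 / 72) * phi N a := by
  unfold phi
  have hs : 0 < a * (N - a) := mul_pos ha (by linarith)
  have hp : 0 ≤ (a - d) * (N - (a - d)) := mul_nonneg (by linarith) (by linarith)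
  have hq : 0 ≤ (a + d) * (N - (a + d)) := mul_nonneg (by linarith) (by linarith)
  -- `s² ≤ 9 d² N²`, from `s ≤ 3 d N`
  have hdN : a * (N - a) ≤ 3 * (d * N) := by
    rcases h3 with h | h
    · nlinarith
    · nlinarith
  have hsq : (a * (N - a)) ^ 2 ≤ 9 * (d ^ 2 * N ^ 2) := by
    have := pow_le_pow_left₀ hs.le hdN 2
    nlinarith
  have hpe : (a - d) * (N - (a - d)) = a * (N - a) - d ^ 2 - d * (N - 2 * a) := by ring
  have hqe : (a + d) * (N - (a + d)) = a * (N - a) - d ^ 2 + d * (N - 2 * a) := by ring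
  have hE : d ^ 2 * N ^ 2 = (d * (N - 2 * a)) ^ 2 + 4 * d ^ 2 * (a * (N - a)) := by ring
  rw [hpe] at hp ⊢
  rw [hqe] at hq ⊢
  rw [hE] at hsq
  generalize a * (N - a) = s at *
  generalize d * (N - 2 * a) = e at *
  have he : e ^ 2 ≤ (s - d ^ 2) ^ 2 := by nlinarith
  have hsd : 0 ≤ s - d ^ 2 := by linarith
  have hes : e ^ 2 / (2 * s) ≤ s - d ^ 2 := by
    rw [div_le_iff₀ (by positivity)]
    nlinarith [sq_nonneg d]
  have hmid : Real.sqrt (s - d ^ 2 - e) * Real.sqrt (s - d ^ 2 + e)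
      ≤ s - d ^ 2 - e ^ 2 / (2 * s) := by
    rw [← Real.sqrt_mul hp]
    apply Real.sqrt_le_iff.mpr ⟨by linarith, ?_⟩
    have h2s : e ^ 2 / (2 * s) * (2 * s) = e ^ 2 := by field_simp
    have hz : 0 ≤ e ^ 2 / (2 * s) := by positivity
    generalize e ^ 2 / (2 * s) = z at *
    nlinarith [mul_nonneg hz (sq_nonneg d), sq_nonneg z]
  have hfin : 4 * s - 4 * d ^ 2 - 2 * (e ^ 2 / (2 * s)) ≤ 4 * s * (35 / 36) := by
    have : s / 9 - 4 * d ^ 2 ≤ 2 * (e ^ 2 / (2 * s)) := by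
      rw [← mul_div_assoc, le_div_iff₀ (by positivity)]
      nlinarith
    linarith
  have e1 := Real.sq_sqrt hp
  have e2 := Real.sq_sqrt hq
  have e3 := Real.sq_sqrt hs.le
  apply le_of_sq_le_sq _ (by positivity)
  nlinarith

lemma Delta_bounds (N a : ℕ) :
    Delta N a ≤ a ∧ Delta N a ≤ N - a ∧ (a ≤ 3 * Delta N a ∨ N - a ≤ 3 * Delta N a) := by
  unfold Delta
  omega

lemma Pmat_phi_le (N : ℕ) (a : Fin (N + 1)) (ha : (a : ℕ) ≠ 0) :
    ∑ c, Pmat N a c * phi N (c : ℕ) ≤ 71 / 72 * phi N (a : ℕ) := by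
  obtain ⟨h1, h2, h3⟩ := Delta_bounds N a
  by_cases haN : (a : ℕ) = N
  · simp [Pmat, haN, phi]
  have hlt : (a : ℕ) < N := by omega
  have key : ∑ c, Pmat N a c * phi N (c : ℕ) =
      1 / 2 * phi N ((a - Delta N a : ℕ) : ℝ) + 1 / 2 * phi N ((a + Delta N a : ℕ) : ℝ) := by
    have hc (x : ℕ) (hx : x < N + 1) :
        ∑ c : Fin (N + 1), (if (c : ℕ) = x then (1 / 2 : ℝ) else 0) * phi N (c : ℕ)
          = 1 / 2 * phi N (x : ℝ) := by
      rw [Finset.sum_eq_single ⟨x, hx⟩]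
      · simp
      · intro b _ hb
        rw [if_neg (fun h => hb (Fin.ext h)), zero_mul]
      · simp
    simp only [Pmat, ha, haN, or_self, if_false, add_mul, Finset.sum_add_distrib]
    rw [hc _ (by omega), hc _ (by omega)]
  rw [key, Nat.cast_sub h1, Nat.cast_add]
  have hNa : ((N - a : ℕ) : ℝ) = (N : ℝ) - (a : ℕ) := Nat.cast_sub hlt.le
  have := phi_avg_le N (a : ℕ) (Delta N a : ℕ) (by exact_mod_cast Nat.pos_of_ne_zero ha)
    (by exact_mod_cast hlt) (by positivity) (by exact_mod_cast h1)
    (by rw [← hNa]; exact_mod_cast h2)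
    (by rw [← hNa]; exact_mod_cast h3)
  linarith

/-- The Doob transform `g(b) = φ(b)/b` of `φ`; the index `i` stands for the state `i + 1`. -/
noncomputable def gvec (N : ℕ) : Fin N → ℝ := fun b => phi N ((b : ℕ) + 1) / ((b : ℕ) + 1)

lemma Qmat_nonneg (N : ℕ) (a b : Fin N) : 0 ≤ Qmat N a b := by
  have : ∀ c d, 0 ≤ Pmat N c d := by
    intro c d
    unfold Pmat
    split_ifs <;> norm_num
  exact mul_nonneg (by positivity) (this _ _)

lemma Qmat_mulVec_le (N : ℕ) (a : Fin N) : (Qmat N *ᵥ gvec N) a ≤ 71 / 72 * gvec N a := by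
  have h := Pmat_phi_le N a.succ (by simp)
  -- the state `0`, absent from `Q`, contributes nothing because `φ(0) = 0`
  rw [Fin.sum_univ_succ] at h
  have h0 : phi N (((0 : Fin (N + 1)) : ℕ) : ℝ) = 0 := by simp [phi]
  rw [h0, mul_zero, zero_add] at h
  simp only [Fin.val_succ, Nat.cast_add, Nat.cast_one] at h
  have hpos : (0 : ℝ) < (a : ℕ) + 1 := by positivity
  have e : (Qmat N *ᵥ gvec N) a =
      (∑ c : Fin N, Pmat N a.succ c.succ * phi N ((c : ℕ) + 1)) / ((a : ℕ) + 1) := by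
    rw [Finset.sum_div]
    simp only [Matrix.mulVec, dotProduct]
    refine Finset.sum_congr rfl fun c _ => ?_
    have hc : ((c : ℕ) + 1 : ℝ) ≠ 0 := by positivity
    change ((c : ℕ) + 1 : ℝ) / ((a : ℕ) + 1) * Pmat N a.succ c.succ *
      (phi N ((c : ℕ) + 1) / ((c : ℕ) + 1)) = _
    field_simp
  rw [e]
  unfold gvec
  rw [← mul_div_assoc]
  exact div_le_div_of_nonneg_right h hpos.le

lemma Qmat_pow_nonneg (N l : ℕ) (a b : Fin N) : 0 ≤ (Qmat N ^ l) a b := by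
  induction l generalizing a b with
  | zero => rw [pow_zero, Matrix.one_apply]; split_ifs <;> norm_num
  | succ k ih =>
    rw [pow_succ, Matrix.mul_apply]
    exact Finset.sum_nonneg fun c _ => mul_nonneg (ih _ _) (Qmat_nonneg _ _ _)

lemma Qmat_pow_mulVec_le (N l : ℕ) (a : Fin N) :
    ((Qmat N ^ l) *ᵥ gvec N) a ≤ (71 / 72) ^ l * gvec N a := by
  induction l with
  | zero => simp
  | succ k ih =>
    rw [pow_succ, ← Matrix.mulVec_mulVec]
    calc ((Qmat N ^ k) *ᵥ (Qmat N *ᵥ gvec N)) a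
        ≤ ((Qmat N ^ k) *ᵥ ((71 / 72 : ℝ) • gvec N)) a := by
          simp only [Matrix.mulVec.eq_1 (Qmat N ^ k), dotProduct]
          exact Finset.sum_le_sum fun c _ =>
            mul_le_mul_of_nonneg_left (Qmat_mulVec_le N c) (Qmat_pow_nonneg N k a c)
      _ = 71 / 72 * ((Qmat N ^ k) *ᵥ gvec N) a := by rw [Matrix.mulVec_smul]; rfl
      _ ≤ (71 / 72) ^ (k + 1) * gvec N a := by rw [pow_succ]; linarith

lemma one_sub_le_gvec (N : ℕ) (b : Fin N) : 1 - ((b : ℕ) + 1 : ℝ) / N ≤ gvec N b := by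
  have hb : ((b : ℕ) + 1 : ℝ) ≤ N := by exact_mod_cast b.isLt
  have hx : (0 : ℝ) < (b : ℕ) + 1 := by positivity
  unfold gvec phi
  generalize ((b : ℕ) + 1 : ℝ) = x at *
  have hN : (0 : ℝ) < N := by linarith
  rw [le_div_iff₀ hx]
  apply Real.le_sqrt_of_sq_le
  have e : (1 - x / N) * x = x * (N - x) / N := by field_simp
  have hs : 0 ≤ x * (N - x) := mul_nonneg hx.le (by linarith)
  rw [e, div_pow, div_le_iff₀ (by positivity)]
  nlinarith [mul_nonneg hs (by nlinarith : 0 ≤ (N : ℝ) ^ 2 - x * (N - x))]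

/-- For every `N ≥ 1` and `ℓ ≥ 1`:
`Σ_{b=1}^{N} (Q^ℓ)(1,b)·(1 − b/N) ≤ √N · (71/72)^ℓ`. -/
theorem stmt13 (N : ℕ) (hN : 1 ≤ N) (l : ℕ) (hl : 1 ≤ l) :
    ∑ b : Fin N, (Qmat N ^ l) ⟨0, hN⟩ b * (1 - ((b : ℕ) + 1 : ℝ) / N)
      ≤ Real.sqrt N * (71/72) ^ l := by
  calc ∑ b : Fin N, (Qmat N ^ l) ⟨0, hN⟩ b * (1 - ((b : ℕ) + 1 : ℝ) / N)
      ≤ ((Qmat N ^ l) *ᵥ gvec N) ⟨0, hN⟩ :=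
        Finset.sum_le_sum fun c _ =>
          mul_le_mul_of_nonneg_left (one_sub_le_gvec N c) (Qmat_pow_nonneg N l _ c)
    _ ≤ (71 / 72) ^ l * gvec N ⟨0, hN⟩ := Qmat_pow_mulVec_le N l _
    _ ≤ (71 / 72) ^ l * Real.sqrt N := by
        refine mul_le_mul_of_nonneg_left ?_ (by positivity)
        simp only [gvec, phi, Nat.cast_zero, zero_add, one_mul, div_one]
        exact Real.sqrt_le_sqrt (by linarith)
    _ = Real.sqrt N * (71 / 72) ^ l := mul_comm _ _
end

section
/- For all integers N ≥ 2 and r with 1 ≤ r ≤ N−1, setting Δ = ⌈min(r, N−r)/3⌉ and f(a) = √(min(a, N−a)) for 0 ≤ a ≤ N, one has (1/2)·(f(r+Δ) + f(r−Δ)) ≤ (71/72)·f(r). -/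
/-- `f(a) = √(min(a, N−a))`. -/
noncomputable def fmin (N a : ℕ) : ℝ := Real.sqrt (min a (N - a))

theorem sqrt_add_sqrt_le {m d u v : ℝ} (hm : 0 ≤ m) (hd : m ≤ 3 * d) (hdm : d ≤ m)
    (hu : u ≤ m + d) (hv : v ≤ m - d) :
    √u + √v ≤ 71 / 36 * √m := by
  have hu' : √u ≤ √(m + d) := Real.sqrt_le_sqrt hu
  have hv' : √v ≤ √(m - d) := Real.sqrt_le_sqrt hv
  have hA : √(m + d) ^ 2 = m + d := Real.sq_sqrt (by linarith)
  have hB : √(m - d) ^ 2 = m - d := Real.sq_sqrt (by linarith)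
  have hC : √m ^ 2 = m := Real.sq_sqrt hm
  -- `√(8/9) < 118/125`, and `118/125` is still small enough for the constant `71/36`.
  have hAB : √(m + d) * √(m - d) ≤ 118 / 125 * m := by
    refine (sq_le_sq₀ (by positivity) (by positivity)).mp ?_
    rw [mul_pow, hA, hB]
    nlinarith
  have hsum : √(m + d) + √(m - d) ≤ 71 / 36 * √m := by
    refine (sq_le_sq₀ (by positivity) (by positivity)).mp ?_
    rw [mul_pow, hC]
    nlinarith
  linarith

/-- For integers `N ≥ 2` and `1 ≤ r ≤ N−1`, with `Δ = ⌈min(r,N−r)/3⌉` and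
`f(a) = √(min(a, N−a))`: `(1/2)·(f(r+Δ) + f(r−Δ)) ≤ (71/72)·f(r)`. -/
theorem stmt14 (N r : ℕ) (hN : 2 ≤ N) (hr1 : 1 ≤ r) (hr2 : r ≤ N - 1) :
    (1/2) * (fmin N (r + Delta N r) + fmin N (r - Delta N r))
      ≤ (71/72) * fmin N r := by
  have hd : Delta N r = (min r (N - r) + 2) / 3 := rfl
  generalize Delta N r = d at hd ⊢
  have hdr : d ≤ r := by omega
  have hdN : r + d ≤ N := by omega
  unfold fmin
  rw [Nat.cast_sub hdr, Nat.cast_add]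
  rcases le_total r (N - r) with h | h
  · have h1 : r ≤ 3 * d := by omega
    have h2 : r + r ≤ N := by omega
    have h1' : (r : ℝ) ≤ 3 * d := by exact_mod_cast h1
    have h2' : (r : ℝ) + r ≤ N := by exact_mod_cast h2
    have hdr' : (d : ℝ) ≤ r := by exact_mod_cast hdr
    have key := sqrt_add_sqrt_le (Nat.cast_nonneg r) h1' hdr'
      (min_le_left ((r : ℝ) + d) (N - (r + d))) (min_le_left ((r : ℝ) - d) (N - (r - d)))
    rw [min_eq_left (show (r : ℝ) ≤ N - r by linarith)]
    linarith
  · have h1 : N ≤ 3 * d + r := by omega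
    have h2 : N ≤ r + r := by omega
    have h1' : (N : ℝ) ≤ 3 * d + r := by exact_mod_cast h1
    have h2' : (N : ℝ) ≤ r + r := by exact_mod_cast h2
    have hdN' : (r : ℝ) + d ≤ N := by exact_mod_cast hdN
    have hd0 : (0 : ℝ) ≤ d := Nat.cast_nonneg d
    -- Here `m = N − r`, and the point `r − d` is the one whose value is at most `m + d`.
    have key := sqrt_add_sqrt_le (m := (N : ℝ) - r) (d := d) (by linarith) (by linarith)
      (by linarith)
      ((min_le_right ((r : ℝ) - d) (N - (r - d))).trans (by linarith))
      ((min_le_right ((r : ℝ) + d) (N - (r + d))).trans (by linarith))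
    rw [min_eq_right (show (N : ℝ) - r ≤ r by linarith)]
    linarith
end
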